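/- arXiv:1901.06482 — 3 statements merged into one kernel-verified Lean document; each statement's English description precedes it below -/
import Mathlib

section
/- For every (u, v) ∈ ℝ^n × ℝ^n and every global minimizer (u*, v*) of f, one has f(u, v) − f(u*, v*) ≤ (‖u − u*‖_∞ + ‖v − v*‖_∞) · E(u, v). -/
open Finset

/-- ℓ∞-norm of a vector in ℝ^n. -/
noncomputable def infNorm {n : ℕ} (u : Fin n → ℝ) : ℝ := ⨆ i, |u i|

/-- The matrix B(u,v) with entries exp(u_i + v_j - C_ij/η). -/
noncomputable def Bmat {n : ℕ} (η : ℝ) (C : Fin n → Fin n → ℝ) (u v : Fin n → ℝ)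
    (i j : Fin n) : ℝ := Real.exp (u i + v j - C i j / η)

/-- Row sums of B(u,v). -/
noncomputable def rowSum {n : ℕ} (η : ℝ) (C : Fin n → Fin n → ℝ) (u v : Fin n → ℝ)
    (i : Fin n) : ℝ := ∑ j, Bmat η C u v i j

/-- Column sums of B(u,v). -/
noncomputable def colSum {n : ℕ} (η : ℝ) (C : Fin n → Fin n → ℝ) (u v : Fin n → ℝ)
    (j : Fin n) : ℝ := ∑ i, Bmat η C u v i j

/-- Dual objective f(u,v) = Σ_{ij} B(u,v)_{ij} - ⟨u,r⟩ - ⟨v,c⟩. -/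
noncomputable def dualObj {n : ℕ} (η : ℝ) (C : Fin n → Fin n → ℝ) (r c : Fin n → ℝ)
    (u v : Fin n → ℝ) : ℝ :=
  (∑ i, ∑ j, Bmat η C u v i j) - (∑ i, u i * r i) - (∑ j, v j * c j)

/-- Residual E(u,v). -/
noncomputable def resid {n : ℕ} (η : ℝ) (C : Fin n → Fin n → ℝ) (r c : Fin n → ℝ)
    (u v : Fin n → ℝ) : ℝ :=
  (∑ i, |rowSum η C u v i - r i|) + (∑ j, |colSum η C u v j - c j|)

/-!
The dual objective is convex, and its partial gradients at `(u, v)` are the differences between the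
marginals of `B(u, v)` and the targets `r`, `c`. The gradient inequality at `(u, v)` therefore
bounds `f(u, v) - f(u', v')` by the pairing of `(u - u', v - v')` with these differences, and
`ℓ∞`–`ℓ¹` duality bounds the pairing by the norms times the residual.
-/

theorem exp_sub_exp_le_sub_mul_exp (x y : ℝ) :
    Real.exp x - Real.exp y ≤ (x - y) * Real.exp x := by
  have tangent : (y - x + 1) * Real.exp x ≤ Real.exp y := by
    calc (y - x + 1) * Real.exp x ≤ Real.exp (y - x) * Real.exp x := by
          gcongr
          exact Real.add_one_le_exp _
      _ = Real.exp y := by rw [← Real.exp_add, sub_add_cancel]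
  linarith

section FiniteSums

variable {ι κ : Type*} [Fintype ι] [Fintype κ]

theorem sum_mul_le_norm_mul_sum_abs (w z : ι → ℝ) : ∑ i, w i * z i ≤ ‖w‖ * ∑ i, |z i| := by
  rw [mul_sum]
  refine sum_le_sum fun i _ ↦ ?_
  calc w i * z i ≤ |w i| * |z i| := (le_abs_self _).trans_eq (abs_mul _ _)
    _ ≤ ‖w‖ * |z i| := by
      gcongr
      exact norm_le_pi_norm w i

theorem sum_sum_add_mul {R : Type*} [NonUnitalNonAssocSemiring R] (B : Matrix ι κ R) (a : ι → R)
    (b : κ → R) :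
    ∑ i, ∑ j, (a i + b j) * B i j = ∑ i, a i * ∑ j, B i j + ∑ j, b j * ∑ i, B i j := by
  simp only [add_mul, sum_add_distrib, mul_sum]
  rw [sum_comm (f := fun i j ↦ b j * B i j)]

end FiniteSums

section EntropicDual

variable {ι κ : Type*}

/-- The Gibbs matrix with potentials `u`, `v`, as it arises in entropic optimal transport. The cost
`M` is already divided by the regularization parameter. -/
noncomputable def gibbsMatrix (M : ι → κ → ℝ) (u : ι → ℝ) (v : κ → ℝ) : Matrix ι κ ℝ :=
  fun i j ↦ Real.exp (u i + v j - M i j)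

variable [Fintype ι] [Fintype κ]

/-- The entropic optimal transport dual objective, in minimization form, for the rescaled cost `M`
and target marginals `r`, `c`. -/
noncomputable def entropicDual (M : ι → κ → ℝ) (r : ι → ℝ) (c : κ → ℝ) (u : ι → ℝ) (v : κ → ℝ) :
    ℝ :=
  (∑ i, ∑ j, gibbsMatrix M u v i j) - (∑ i, u i * r i) - (∑ j, v j * c j)

/-- The total `ℓ¹` distance from the row and column sums of `B` to the target marginals `r`, `c`;
it measures how far `B` is from being a transport plan. -/
noncomputable def marginalError (B : Matrix ι κ ℝ) (r : ι → ℝ) (c : κ → ℝ) : ℝ :=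
  (∑ i, |∑ j, B i j - r i|) + (∑ j, |∑ i, B i j - c j|)

theorem sum_gibbsMatrix_sub_le (M : ι → κ → ℝ) (u u' : ι → ℝ) (v v' : κ → ℝ) :
    ∑ i, ∑ j, gibbsMatrix M u v i j - ∑ i, ∑ j, gibbsMatrix M u' v' i j ≤
      ∑ i, ∑ j, ((u - u') i + (v - v') j) * gibbsMatrix M u v i j := by
  simp only [← sum_sub_distrib]
  gcongr with i _ j
  refine (exp_sub_exp_le_sub_mul_exp _ _).trans_eq ?_
  simp only [gibbsMatrix, Pi.sub_apply]
  ring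

theorem entropicDual_sub_le_gradient (M : ι → κ → ℝ) (r : ι → ℝ) (c : κ → ℝ)
    (u u' : ι → ℝ) (v v' : κ → ℝ) :
    entropicDual M r c u v - entropicDual M r c u' v' ≤
      ∑ i, (u - u') i * (∑ j, gibbsMatrix M u v i j - r i) +
        ∑ j, (v - v') j * (∑ i, gibbsMatrix M u v i j - c j) := by
  have mass := sum_gibbsMatrix_sub_le M u u' v v'
  rw [sum_sum_add_mul] at mass
  simp only [entropicDual, mul_sub, sum_sub_distrib, Pi.sub_apply, sub_mul] at mass ⊢
  linarith

theorem stmt1_general (M : ι → κ → ℝ) (r : ι → ℝ) (c : κ → ℝ) (u u' : ι → ℝ) (v v' : κ → ℝ) :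
    entropicDual M r c u v - entropicDual M r c u' v' ≤
      (‖u - u'‖ + ‖v - v'‖) * marginalError (gibbsMatrix M u v) r c := by
  set B := gibbsMatrix M u v
  calc entropicDual M r c u v - entropicDual M r c u' v'
      ≤ ∑ i, (u - u') i * (∑ j, B i j - r i) + ∑ j, (v - v') j * (∑ i, B i j - c j) :=
        entropicDual_sub_le_gradient M r c u u' v v'
    _ ≤ ‖u - u'‖ * ∑ i, |∑ j, B i j - r i| + ‖v - v'‖ * ∑ j, |∑ i, B i j - c j| := by
        gcongr <;> exact sum_mul_le_norm_mul_sum_abs _ _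
    _ ≤ ‖u - u'‖ * marginalError B r c + ‖v - v'‖ * marginalError B r c := by
        gcongr
        · exact le_add_of_nonneg_right (by positivity)
        · exact le_add_of_nonneg_left (by positivity)
    _ = (‖u - u'‖ + ‖v - v'‖) * marginalError B r c := (add_mul _ _ _).symm

end EntropicDual

theorem infNorm_eq_norm {n : ℕ} (u : Fin n → ℝ) : infNorm u = ‖u‖ :=
  (PiLp.norm_eq_ciSup (WithLp.toLp ⊤ u)).symm.trans (PiLp.norm_toLp u)

theorem stmt1 (n : ℕ) (hn : 2 ≤ n) (η : ℝ) (hη : 0 < η)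
    (C : Fin n → Fin n → ℝ) (hC : ∀ i j, 0 ≤ C i j)
    (r c : Fin n → ℝ) (hr : ∀ i, 0 < r i) (hc : ∀ j, 0 < c j)
    (hr1 : ∑ i, r i = 1) (hc1 : ∑ j, c j = 1)
    (us vs : Fin n → ℝ)
    (hmin : ∀ u v : Fin n → ℝ, dualObj η C r c us vs ≤ dualObj η C r c u v) :
    ∀ u v : Fin n → ℝ, dualObj η C r c u v - dualObj η C r c us vs ≤
      (infNorm (u - us) + infNorm (v - vs)) * resid η C r c u v := by
  intro u v
  rw [infNorm_eq_norm, infNorm_eq_norm]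
  exact stmt1_general (fun i j ↦ C i j / η) r c u us v vs
end

section
/- Let φ : ℝ^m → ℝ be convex and differentiable, δ > 0, and ψ : ℝ^m → ℝ differentiable with Bregman divergence B_ψ(z, z') = ψ(z) − ψ(z') − ⟨∇ψ(z'), z − z'⟩ satisfying (1/(2δ))‖z − z'‖_∞² ≤ B_ψ(z, z') ≤ (1/2)‖z − z'‖_∞² for all z, z'. Consider sequences (α^j)_{j≥1}, (ᾱ^j)_{j≥0}, (M^j)_{j≥0}, (z^j)_{j≥0}, (μ^j)_{j≥1}, (λ^j)_{j≥0} with ᾱ^0 = 0, z^0 = λ^0 = 0, and for each j ≥ 1: α^j > 0, M^{j−1} > 0, ᾱ^j = ᾱ^{j−1} + α^j, δ M^{j−1} (α^j)² = ᾱ^j, μ^j = (α^j z^{j−1} + ᾱ^{j−1} λ^{j−1})/ᾱ^j, ⟨α^j ∇φ(μ^j) + ∇ψ(z^j) − ∇ψ(z^{j−1}), w − z^j⟩ ≥ 0 for all w ∈ ℝ^m, λ^j = (α^j z^j + ᾱ^{j−1} λ^{j−1})/ᾱ^j, and φ(λ^j) − φ(μ^j) − ⟨∇φ(μ^j), λ^j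 − μ^j⟩ ≤ (M^{j−1}/2)‖λ^j − μ^j‖_∞². Then for every t ≥ 1 and every z ∈ ℝ^m: ᾱ^t φ(λ^t) ≤ Σ_{j=1}^t α^j (φ(μ^j) + ⟨∇φ(μ^j), z − μ^j⟩) + ‖z‖_∞². -/
open Finset

/-- ℓ∞-norm of a vector. -/
noncomputable def linfNorm {k : ℕ} (x : Fin k → ℝ) : ℝ := ⨆ i, |x i|

/-- Bregman divergence of a differentiable function ψ on ℝ^m. -/
noncomputable def bregman {m : ℕ} (ψ : (Fin m → ℝ) → ℝ) (z z' : Fin m → ℝ) : ℝ :=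
  ψ z - ψ z' - fderiv ℝ ψ z' (z - z')

/-!
Track the potential `A t * φ (lam t) + B_ψ(w, z t)`. In one step, convexity of `φ` bounds
`A (t + 1) * φ (lam (t + 1))` by the linearization of `φ` at `μ (t + 1)`, up to the error
`A (t + 1) * B_φ(lam (t + 1), μ (t + 1))`. The weights are chosen so that, by homogeneity of the
norm, the line search bounds this error by `‖z (t + 1) - z t‖ ^ 2 / (2 * δ)`, which is at most the
amount `B_ψ(z (t + 1), z t)` that the mirror step gains through the three-point identity.
-/

section Bregman

variable {E : Type*} [AddCommGroup E] [Module ℝ E]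

/-- The Bregman divergence of `f` at `x` from base point `y`, with a prescribed functional `f' y` in
the role of the derivative. Leaving `f'` free covers subgradients as well as gradients: the
divergence is nonnegative exactly when every `f' y` is a subgradient of `f` at `y`. -/
def bregmanDiv (f : E → ℝ) (f' : E → Module.Dual ℝ E) (x y : E) : ℝ :=
  f x - f y - f' y (x - y)

theorem bregmanDiv_three_point (f : E → ℝ) (f' : E → Module.Dual ℝ E) (w x y : E) :
    bregmanDiv f f' w y = bregmanDiv f f' w x + bregmanDiv f f' x y
      + (f' x (w - x) - f' y (w - x)) := by
  simp only [bregmanDiv, map_sub]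
  ring

theorem add_mul_apply_eq_bregmanDiv (f : E → ℝ) (f' : E → Module.Dual ℝ E) {a b : ℝ}
    {u v y : E} (x : E) (hy : (a + b) • y = a • u + b • v) :
    (a + b) * f y = (a + b) * bregmanDiv f f' y x + a * (f x + f' x (u - x))
      + b * (f v - bregmanDiv f f' v x) := by
  have hlin : (a + b) * f' x y = a * f' x u + b * f' x v := by
    simpa only [map_add, map_smul, smul_eq_mul] using congrArg (f' x) hy
  simp only [bregmanDiv, map_sub]
  linear_combination hlin

end Bregman

theorem bregmanDiv_fderiv_nonneg_of_convexOn {E : Type*} [NormedAddCommGroup E] [NormedSpace ℝ E]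
    {s : Set E} {f : E → ℝ} {x y : E} (hf : ConvexOn ℝ s f) (hx : x ∈ s) (hy : y ∈ s)
    (hfy : DifferentiableAt ℝ f y) : 0 ≤ bregmanDiv f (fun p => fderiv ℝ f p) x y := by
  let line : ℝ →ᵃ[ℝ] E := AffineMap.lineMap y x
  have hconv : ConvexOn ℝ (line ⁻¹' s) (f ∘ line) := hf.comp_affineMap line
  have hderiv : HasDerivAt (f ∘ line) (fderiv ℝ f y (x - y)) 0 :=
    hfy.hasFDerivAt.comp_hasDerivAt_of_eq 0 AffineMap.hasDerivAt_lineMap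
      (AffineMap.lineMap_apply_zero y x).symm
  have hslope : fderiv ℝ f y (x - y) ≤ slope (f ∘ line) 0 1 :=
    hconv.le_slope_of_hasDerivAt (by simpa [line] using hy) (by simpa [line] using hx)
      one_pos hderiv
  have hvalue : slope (f ∘ line) 0 1 = f x - f y := by simp [slope_def_field, line]
  exact sub_nonneg.2 (hslope.trans_eq hvalue)

theorem linfNorm_eq_norm {k : ℕ} (x : Fin k → ℝ) : linfNorm x = ‖x‖ := by
  rw [← PiLp.norm_toLp, PiLp.norm_eq_ciSup]
  rfl

section MirrorDescent

variable {E : Type*} [SeminormedAddCommGroup E] [NormedSpace ℝ E]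

/-- A run of accelerated mirror descent for the objective `φ`, whose (sub)gradients are meant to be
`φ'`, with mirror map `ψ'`: weights `α` with running sums `A`, line-search constants `M`, mirror
iterates `z`, averaged iterates `lam` and query points `μ`. The step from time `n` to time `n + 1`
uses `M n`; the entries of `α` and `μ` at index `0` are meaningless. -/
structure IsAcceleratedMirrorDescent (φ : E → ℝ) (φ' ψ' : E → Module.Dual ℝ E) (δ : ℝ)
    (α A M : ℕ → ℝ) (z lam μ : ℕ → E) : Prop where
  weight_zero : A 0 = 0
  weight_succ : ∀ n, A (n + 1) = A n + α (n + 1)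
  step_pos : ∀ n, 0 < α (n + 1)
  step_eq : ∀ n, δ * M n * α (n + 1) ^ 2 = A (n + 1)
  query_eq : ∀ n, μ (n + 1) = (A (n + 1))⁻¹ • (α (n + 1) • z n + A n • lam n)
  mirror_step : ∀ n w, 0 ≤ α (n + 1) * φ' (μ (n + 1)) (w - z (n + 1))
    + ψ' (z (n + 1)) (w - z (n + 1)) - ψ' (z n) (w - z (n + 1))
  average_eq : ∀ n, lam (n + 1) = (A (n + 1))⁻¹ • (α (n + 1) • z (n + 1) + A n • lam n)
  line_search : ∀ n, bregmanDiv φ φ' (lam (n + 1)) (μ (n + 1)) ≤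
    M n / 2 * ‖lam (n + 1) - μ (n + 1)‖ ^ 2

namespace IsAcceleratedMirrorDescent

variable {φ ψ : E → ℝ} {φ' ψ' : E → Module.Dual ℝ E} {δ : ℝ} {α A M : ℕ → ℝ} {z lam μ : ℕ → E}

theorem weight_nonneg (h : IsAcceleratedMirrorDescent φ φ' ψ' δ α A M z lam μ) (n : ℕ) :
    0 ≤ A n := by
  induction n with
  | zero => exact h.weight_zero.ge
  | succ n ih => exact h.weight_succ n ▸ add_nonneg ih (h.step_pos n).le

theorem weight_succ_pos (h : IsAcceleratedMirrorDescent φ φ' ψ' δ α A M z lam μ) (n : ℕ) :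
    0 < A (n + 1) :=
  h.weight_succ n ▸ add_pos_of_nonneg_of_pos (h.weight_nonneg n) (h.step_pos n)

theorem average_sub_query (h : IsAcceleratedMirrorDescent φ φ' ψ' δ α A M z lam μ) (n : ℕ) :
    lam (n + 1) - μ (n + 1) = (α (n + 1) / A (n + 1)) • (z (n + 1) - z n) := by
  rw [h.average_eq, h.query_eq]
  module

theorem weight_mul_bregmanDiv_le (h : IsAcceleratedMirrorDescent φ φ' ψ' δ α A M z lam μ)
    (n : ℕ) : A (n + 1) * bregmanDiv φ φ' (lam (n + 1)) (μ (n + 1)) ≤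
      1 / (2 * δ) * ‖z (n + 1) - z n‖ ^ 2 := by
  have hA := h.weight_succ_pos n
  have hδ : δ ≠ 0 := by
    rintro rfl
    simpa [hA.ne] using h.step_eq n
  have hcoeff : A (n + 1) * (M n / 2 * (α (n + 1) / A (n + 1)) ^ 2) = 1 / (2 * δ) := by
    field_simp
    linear_combination h.step_eq n
  calc A (n + 1) * bregmanDiv φ φ' (lam (n + 1)) (μ (n + 1))
      ≤ A (n + 1) * (M n / 2 * ‖lam (n + 1) - μ (n + 1)‖ ^ 2) :=
        mul_le_mul_of_nonneg_left (h.line_search n) hA.le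
    _ = A (n + 1) * (M n / 2 * (α (n + 1) / A (n + 1)) ^ 2) * ‖z (n + 1) - z n‖ ^ 2 := by
        rw [h.average_sub_query, norm_smul, mul_pow, Real.norm_eq_abs, sq_abs]
        ring
    _ = 1 / (2 * δ) * ‖z (n + 1) - z n‖ ^ 2 := by rw [hcoeff]

theorem weight_mul_apply_average_le (h : IsAcceleratedMirrorDescent φ φ' ψ' δ α A M z lam μ)
    (hφ : ∀ x y, 0 ≤ bregmanDiv φ φ' x y) (n : ℕ) :
    A (n + 1) * φ (lam (n + 1)) ≤
      A n * φ (lam n) + α (n + 1) * (φ (μ (n + 1)) + φ' (μ (n + 1)) (z (n + 1) - μ (n + 1)))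
        + 1 / (2 * δ) * ‖z (n + 1) - z n‖ ^ 2 := by
  have hsum : α (n + 1) + A n = A (n + 1) := by rw [h.weight_succ, add_comm]
  have haverage : (α (n + 1) + A n) • lam (n + 1) = α (n + 1) • z (n + 1) + A n • lam n := by
    rw [hsum, h.average_eq, smul_inv_smul₀ (h.weight_succ_pos n).ne']
  have hexpand := add_mul_apply_eq_bregmanDiv φ φ' (μ (n + 1)) haverage
  rw [hsum] at hexpand
  have herror := h.weight_mul_bregmanDiv_le n
  have hconvex := mul_nonneg (h.weight_nonneg n) (hφ (lam n) (μ (n + 1)))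
  linarith

theorem step_mul_linearization_le (h : IsAcceleratedMirrorDescent φ φ' ψ' δ α A M z lam μ)
    (ψ : E → ℝ) (n : ℕ) (w : E) :
    α (n + 1) * (φ (μ (n + 1)) + φ' (μ (n + 1)) (z (n + 1) - μ (n + 1)))
        + bregmanDiv ψ ψ' w (z (n + 1)) + bregmanDiv ψ ψ' (z (n + 1)) (z n) ≤
      α (n + 1) * (φ (μ (n + 1)) + φ' (μ (n + 1)) (w - μ (n + 1)))
        + bregmanDiv ψ ψ' w (z n) := by
  have hthree := bregmanDiv_three_point ψ ψ' w (z (n + 1)) (z n)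
  have hmirror := h.mirror_step n w
  have hsplit : φ' (μ (n + 1)) (w - z (n + 1)) =
      φ' (μ (n + 1)) (w - μ (n + 1)) - φ' (μ (n + 1)) (z (n + 1) - μ (n + 1)) := by
    rw [← map_sub, sub_sub_sub_cancel_right]
  rw [hsplit] at hmirror
  linarith

theorem potential_succ_le (h : IsAcceleratedMirrorDescent φ φ' ψ' δ α A M z lam μ)
    (hφ : ∀ x y, 0 ≤ bregmanDiv φ φ' x y)
    (hψ : ∀ x y, 1 / (2 * δ) * ‖x - y‖ ^ 2 ≤ bregmanDiv ψ ψ' x y) (n : ℕ) (w : E) :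
    A (n + 1) * φ (lam (n + 1)) + bregmanDiv ψ ψ' w (z (n + 1)) ≤
      A n * φ (lam n) + bregmanDiv ψ ψ' w (z n)
        + α (n + 1) * (φ (μ (n + 1)) + φ' (μ (n + 1)) (w - μ (n + 1))) := by
  linarith [h.weight_mul_apply_average_le hφ n, hψ (z (n + 1)) (z n),
    h.step_mul_linearization_le ψ n w]

theorem potential_le (h : IsAcceleratedMirrorDescent φ φ' ψ' δ α A M z lam μ)
    (hφ : ∀ x y, 0 ≤ bregmanDiv φ φ' x y)
    (hψ : ∀ x y, 1 / (2 * δ) * ‖x - y‖ ^ 2 ≤ bregmanDiv ψ ψ' x y) (t : ℕ) (w : E) :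
    A t * φ (lam t) + bregmanDiv ψ ψ' w (z t) ≤
      (∑ j ∈ Icc 1 t, α j * (φ (μ j) + φ' (μ j) (w - μ j))) + bregmanDiv ψ ψ' w (z 0) := by
  induction t with
  | zero => simp [h.weight_zero]
  | succ n ih =>
    rw [sum_Icc_succ_top n.succ_pos]
    linarith [h.potential_succ_le hφ hψ n w]

end IsAcceleratedMirrorDescent

theorem stmt11_general {φ ψ : E → ℝ} {φ' ψ' : E → Module.Dual ℝ E} {δ : ℝ} {α A M : ℕ → ℝ}
    {z lam μ : ℕ → E} (h : IsAcceleratedMirrorDescent φ φ' ψ' δ α A M z lam μ) (hδ : 0 < δ)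
    (hφ : ∀ x y, 0 ≤ bregmanDiv φ φ' x y)
    (hψ : ∀ x y, 1 / (2 * δ) * ‖x - y‖ ^ 2 ≤ bregmanDiv ψ ψ' x y) (t : ℕ) (w : E) :
    A t * φ (lam t) ≤
      (∑ j ∈ Icc 1 t, α j * (φ (μ j) + φ' (μ j) (w - μ j))) + bregmanDiv ψ ψ' w (z 0) := by
  have hdiv : 0 ≤ bregmanDiv ψ ψ' w (z t) := le_trans (by positivity) (hψ w (z t))
  exact (le_add_of_nonneg_right hdiv).trans (h.potential_le hφ hψ t w)

end MirrorDescent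

theorem fun_combination_div_eq_inv_smul {ι : Type*} (a b c : ℝ) (x y : ι → ℝ) :
    (fun i => (a * x i + b * y i) / c) = c⁻¹ • (a • x + b • y) := by
  ext i
  simp [div_eq_inv_mul]

theorem stmt11 (m : ℕ) (φ ψ : (Fin m → ℝ) → ℝ)
    (hφconv : ConvexOn ℝ Set.univ φ) (hφdiff : Differentiable ℝ φ)
    (hψdiff : Differentiable ℝ ψ)
    (δ : ℝ) (hδ : 0 < δ)
    (hBlow : ∀ z z' : Fin m → ℝ,
      1 / (2 * δ) * (linfNorm (z - z')) ^ 2 ≤ bregman ψ z z')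
    (hBup : ∀ z z' : Fin m → ℝ,
      bregman ψ z z' ≤ 1 / 2 * (linfNorm (z - z')) ^ 2)
    (α abar M : ℕ → ℝ) (z lam μ : ℕ → Fin m → ℝ)
    (habar0 : abar 0 = 0) (hz0 : z 0 = 0) (hlam0 : lam 0 = 0)
    (hαpos : ∀ j : ℕ, 1 ≤ j → 0 < α j)
    (hMpos : ∀ j : ℕ, 1 ≤ j → 0 < M (j - 1))
    (habar : ∀ j : ℕ, 1 ≤ j → abar j = abar (j - 1) + α j)
    (hrel : ∀ j : ℕ, 1 ≤ j → δ * M (j - 1) * (α j) ^ 2 = abar j)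
    (hμ : ∀ j : ℕ, 1 ≤ j →
      μ j = fun i => (α j * z (j - 1) i + abar (j - 1) * lam (j - 1) i) / abar j)
    (hmdopt : ∀ j : ℕ, 1 ≤ j → ∀ w : Fin m → ℝ,
      0 ≤ α j * fderiv ℝ φ (μ j) (w - z j) + fderiv ℝ ψ (z j) (w - z j) -
        fderiv ℝ ψ (z (j - 1)) (w - z j))
    (hlam : ∀ j : ℕ, 1 ≤ j →
      lam j = fun i => (α j * z j i + abar (j - 1) * lam (j - 1) i) / abar j)
    (hline : ∀ j : ℕ, 1 ≤ j →
      φ (lam j) - φ (μ j) - fderiv ℝ φ (μ j) (lam j - μ j) ≤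
        M (j - 1) / 2 * (linfNorm (lam j - μ j)) ^ 2) :
    ∀ t : ℕ, 1 ≤ t → ∀ zz : Fin m → ℝ,
      abar t * φ (lam t) ≤
        (∑ j ∈ Finset.Icc 1 t, α j * (φ (μ j) + fderiv ℝ φ (μ j) (zz - μ j))) +
          (linfNorm zz) ^ 2 := by
  intro t _ w
  simp only [linfNorm_eq_norm] at hBlow hBup hline ⊢
  have hrun : IsAcceleratedMirrorDescent φ (fun x => fderiv ℝ φ x) (fun x => fderiv ℝ ψ x)
      δ α abar M z lam μ :=
    { weight_zero := habar0
      weight_succ n := habar (n + 1) n.succ_pos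
      step_pos n := hαpos (n + 1) n.succ_pos
      step_eq n := hrel (n + 1) n.succ_pos
      query_eq n := (hμ (n + 1) n.succ_pos).trans (fun_combination_div_eq_inv_smul ..)
      mirror_step n := hmdopt (n + 1) n.succ_pos
      average_eq n := (hlam (n + 1) n.succ_pos).trans (fun_combination_div_eq_inv_smul ..)
      line_search n := hline (n + 1) n.succ_pos }
  have hbound := stmt11_general hrun hδ
    (fun x y => bregmanDiv_fderiv_nonneg_of_convexOn hφconv trivial trivial (hφdiff y)) hBlow t w
  have hdiv : bregman ψ w (z 0) ≤ ‖w‖ ^ 2 := by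
    have hup := hBup w (z 0)
    rw [hz0, sub_zero] at hup
    rw [hz0]
    linarith [sq_nonneg ‖w‖]
  exact hbound.trans (add_le_add_right hdiv _)
end

section
/- Define the log-sum-exp dual φ : ℝ^n × ℝ^n → ℝ by φ(α, β) = η log(Σ_{i,j=1}^n exp(−(C_{ij} − α_i − β_j)/η − 1)) − ⟨α, r⟩ − ⟨β, c⟩ − 1. Then there exists a global minimizer (α*, β*) of φ such that ‖α*‖_∞ ≤ η (R + 1/2) and ‖β*‖_∞ ≤ η (R + 1/2), where R = η^{-1}‖C‖_∞ + log n − 2 log(min_{1≤i,j≤n}{r_i, c_j}). -/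
open Finset

/-- ℓ∞-norm of a matrix: the maximum entry (entries are nonnegative). -/
noncomputable def matSup {n : ℕ} (C : Fin n → Fin n → ℝ) : ℝ := ⨆ i, ⨆ j, C i j

/-- min_{1 ≤ i, j ≤ n} { r_i, c_j }. -/
noncomputable def minrc {n : ℕ} (r c : Fin n → ℝ) : ℝ := min (⨅ i, r i) (⨅ j, c j)

/-- The log-sum-exp dual objective
φ(α,β) = η log(Σ_{ij} exp(−(C_ij − α_i − β_j)/η − 1)) − ⟨α,r⟩ − ⟨β,c⟩ − 1. -/
noncomputable def phiLog {n : ℕ} (η : ℝ) (C : Fin n → Fin n → ℝ) (r c : Fin n → ℝ)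
    (a b : Fin n → ℝ) : ℝ :=
  η * Real.log (∑ i, ∑ j, Real.exp (-(C i j - a i - b j) / η - 1)) -
    (∑ i, a i * r i) - (∑ j, b j * c j) - 1

/-!
For fixed `β`, the Gibbs variational principle shows that `φ(·, β)` is minimised by the Sinkhorn
update `αᵢ = η log (rᵢ / wᵢ(β))`, where `wᵢ(β)` is the total Gibbs weight of row `i`. As `φ` is
invariant under adding a constant to `α`, the update may be normalised to vanish at one index; its
entries are then bounded by its oscillation, which is controlled by the oscillation of `C` and the
smallest `rᵢ`, *uniformly in `β`*. Updating `α` and then `β` therefore moves any point, without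
increasing `φ`, into a fixed compact set, and the minimum of `φ` over this set is global.
-/

theorem exists_forall_le_of_isCompact {X α : Type*} [TopologicalSpace X] [LinearOrder α]
    [TopologicalSpace α] [ClosedIicTopology α] {K : Set X} {f : X → α} (hK : IsCompact K)
    (hne : K.Nonempty) (hf : ContinuousOn f K) (hred : ∀ x, ∃ y ∈ K, f y ≤ f x) :
    ∃ x ∈ K, ∀ y, f x ≤ f y := by
  obtain ⟨x, hx, hmin⟩ := hK.exists_isMinOn hne hf
  refine ⟨x, hx, fun y => ?_⟩
  obtain ⟨z, hz, hzy⟩ := hred y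
  exact (isMinOn_iff.mp hmin z hz).trans hzy

theorem sum_mul_log_div_le_log_sum {ι : Type*} [Fintype ι] {p x : ι → ℝ} (hp : ∀ i, 0 < p i)
    (hp1 : ∑ i, p i = 1) (hx : ∀ i, 0 < x i) :
    ∑ i, p i * Real.log (x i / p i) ≤ Real.log (∑ i, x i) := by
  have jensen : ∑ i, p i • Real.log (x i / p i) ≤ Real.log (∑ i, p i • (x i / p i)) :=
    strictConcaveOn_log_Ioi.concaveOn.le_map_sum (fun i _ => (hp i).le) hp1
      fun i _ => div_pos (hx i) (hp i)
  simpa only [smul_eq_mul, mul_div_cancel₀ _ (hp _).ne'] using jensen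

section Sinkhorn

variable {ι κ : Type*} [Fintype κ] {η : ℝ} {C : ι → κ → ℝ} {r : ι → ℝ}

/-- The total Gibbs weight of each row at the potential `α = 0`, that is, the coefficient of
`exp (αᵢ / η)` in the exponential sum inside `φ`. -/
noncomputable def rowWeight (η : ℝ) (C : ι → κ → ℝ) (b : κ → ℝ) (i : ι) : ℝ :=
  ∑ j, Real.exp (-(C i j - b j) / η - 1)

/-- The Sinkhorn update of the first potential: the choice of `α` that makes the Gibbs kernel have
row sums `r`. -/
noncomputable def sinkhornUpdate (η : ℝ) (C : ι → κ → ℝ) (r : ι → ℝ) (b : κ → ℝ) (i : ι) : ℝ :=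
  η * Real.log (r i / rowWeight η C b i)

theorem rowWeight_pos [Nonempty κ] (η : ℝ) (C : ι → κ → ℝ) (b : κ → ℝ) (i : ι) :
    0 < rowWeight η C b i :=
  sum_pos (fun _ _ => Real.exp_pos _) univ_nonempty

theorem rowWeight_le_exp_mul (hη : 0 < η) {M : ℝ} {i k : ι} (hM : ∀ j, C k j - C i j ≤ M)
    (b : κ → ℝ) : rowWeight η C b i ≤ Real.exp (M / η) * rowWeight η C b k := by
  simp only [rowWeight, mul_sum, ← Real.exp_add]
  gcongr with j
  have hosc : (C k j - C i j) / η ≤ M / η := by gcongr; exact hM j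
  linear_combination hosc

theorem rowWeight_mul_exp_sinkhornUpdate [Nonempty κ] (hη : η ≠ 0) {i : ι} (hr : 0 < r i)
    (b : κ → ℝ) : rowWeight η C b i * Real.exp (sinkhornUpdate η C r b i / η) = r i := by
  have hw := rowWeight_pos η C b i
  rw [sinkhornUpdate, mul_div_cancel_left₀ _ hη, Real.exp_log (div_pos hr hw),
    mul_div_cancel₀ _ hw.ne']

theorem sinkhornUpdate_sub_le [Nonempty κ] (hη : 0 < η) {M ρ : ℝ} {i k : ι}
    (hM : ∀ j, C i j - C k j ≤ M) (hρ : 0 < ρ) (hri : 0 < r i) (hri1 : r i ≤ 1) (hrk : ρ ≤ r k)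
    (b : κ → ℝ) :
    sinkhornUpdate η C r b i - sinkhornUpdate η C r b k ≤ M - η * Real.log ρ := by
  have hw := rowWeight_pos η C b
  have hlogw : Real.log (rowWeight η C b k) ≤ M / η + Real.log (rowWeight η C b i) := by
    rw [← Real.log_exp (M / η), ← Real.log_mul (Real.exp_pos _).ne' (hw i).ne']
    exact Real.log_le_log (hw k) (rowWeight_le_exp_mul hη hM b)
  have hlogi : Real.log (r i) ≤ 0 := Real.log_nonpos hri.le hri1
  have hlogk : Real.log ρ ≤ Real.log (r k) := Real.log_le_log hρ hrk
  calc sinkhornUpdate η C r b i - sinkhornUpdate η C r b k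
      = η * (Real.log (r i) - Real.log (r k) +
          (Real.log (rowWeight η C b k) - Real.log (rowWeight η C b i))) := by
        rw [sinkhornUpdate, sinkhornUpdate, Real.log_div hri.ne' (hw i).ne',
          Real.log_div (hρ.trans_le hrk).ne' (hw k).ne']
        ring
    _ ≤ η * (M / η - Real.log ρ) := by
        gcongr
        linarith
    _ = M - η * Real.log ρ := by
        rw [mul_sub, mul_div_cancel₀ _ hη.ne']

end Sinkhorn

section Dual

variable {ι κ : Type*} [Fintype ι] [Fintype κ] {η : ℝ} {C : ι → κ → ℝ} {r : ι → ℝ} {c : κ → ℝ}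

/-- The log-sum-exp dual objective for marginals on arbitrary finite index types; `phiLog` is the
case `ι = κ = Fin n`. -/
noncomputable def lseDual (η : ℝ) (C : ι → κ → ℝ) (r : ι → ℝ) (c : κ → ℝ) (a : ι → ℝ)
    (b : κ → ℝ) : ℝ :=
  η * Real.log (∑ i, ∑ j, Real.exp (-(C i j - a i - b j) / η - 1)) -
    (∑ i, a i * r i) - (∑ j, b j * c j) - 1

theorem lseDual_swap (η : ℝ) (C : ι → κ → ℝ) (r : ι → ℝ) (c : κ → ℝ) (a : ι → ℝ) (b : κ → ℝ) :
    lseDual η (fun j i => C i j) c r b a = lseDual η C r c a b := by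
  simp only [lseDual, sub_right_comm _ (b _) (a _)]
  rw [sum_comm, sub_right_comm (η * _)]

theorem lseDual_eq_rowWeight (η : ℝ) (C : ι → κ → ℝ) (r : ι → ℝ) (c : κ → ℝ) (a : ι → ℝ)
    (b : κ → ℝ) :
    lseDual η C r c a b = η * Real.log (∑ i, rowWeight η C b i * Real.exp (a i / η)) -
      (∑ i, a i * r i) - (∑ j, b j * c j) - 1 := by
  have hsplit (i : ι) (j : κ) : Real.exp (-(C i j - a i - b j) / η - 1) =
      Real.exp (-(C i j - b j) / η - 1) * Real.exp (a i / η) := by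
    rw [← Real.exp_add]
    ring_nf
  simp only [lseDual, rowWeight, hsplit, sum_mul]

theorem continuous_lseDual [Nonempty ι] [Nonempty κ] (η : ℝ) (C : ι → κ → ℝ) (r : ι → ℝ)
    (c : κ → ℝ) : Continuous fun p : (ι → ℝ) × (κ → ℝ) => lseDual η C r c p.1 p.2 := by
  have hpos (p : (ι → ℝ) × (κ → ℝ)) :
      0 < ∑ i, ∑ j, Real.exp (-(C i j - p.1 i - p.2 j) / η - 1) := by positivity
  have hlog : Continuous fun p : (ι → ℝ) × (κ → ℝ) =>
      Real.log (∑ i, ∑ j, Real.exp (-(C i j - p.1 i - p.2 j) / η - 1)) :=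
    Continuous.log (by fun_prop) fun p => (hpos p).ne'
  unfold lseDual
  fun_prop

theorem lseDual_add_const (hη : η ≠ 0) [Nonempty ι] [Nonempty κ] (hr1 : ∑ i, r i = 1)
    (a : ι → ℝ) (b : κ → ℝ) (t : ℝ) :
    lseDual η C r c (fun i => a i + t) b = lseDual η C r c a b := by
  have hpos : 0 < ∑ i, rowWeight η C b i * Real.exp (a i / η) :=
    sum_pos (fun i _ => mul_pos (rowWeight_pos η C b i) (Real.exp_pos _)) univ_nonempty
  simp only [lseDual_eq_rowWeight, add_div, Real.exp_add, ← mul_assoc, ← sum_mul, add_mul,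
    sum_add_distrib, ← mul_sum, hr1]
  rw [Real.log_mul hpos.ne' (Real.exp_pos _).ne', Real.log_exp, mul_add, mul_div_cancel₀ _ hη]
  ring

theorem lseDual_sinkhornUpdate_le [Nonempty κ] (hη : 0 < η) (hr : ∀ i, 0 < r i)
    (hr1 : ∑ i, r i = 1) (a : ι → ℝ) (b : κ → ℝ) :
    lseDual η C r c (sinkhornUpdate η C r b) b ≤ lseDual η C r c a b := by
  have hw := rowWeight_pos η C b
  have hlog (i : ι) : η * Real.log (rowWeight η C b i * Real.exp (a i / η) / r i) =
      a i - sinkhornUpdate η C r b i := by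
    rw [sinkhornUpdate, Real.log_div (mul_pos (hw i) (Real.exp_pos _)).ne' (hr i).ne',
      Real.log_mul (hw i).ne' (Real.exp_pos _).ne', Real.log_exp,
      Real.log_div (hr i).ne' (hw i).ne']
    field_simp
    ring
  have gibbs : ∑ i, a i * r i - ∑ i, sinkhornUpdate η C r b i * r i ≤
      η * Real.log (∑ i, rowWeight η C b i * Real.exp (a i / η)) := by
    calc ∑ i, a i * r i - ∑ i, sinkhornUpdate η C r b i * r i
        = η * ∑ i, r i * Real.log (rowWeight η C b i * Real.exp (a i / η) / r i) := by
          simp only [mul_sum, mul_left_comm η, hlog, mul_sub, sum_sub_distrib, mul_comm]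
      _ ≤ η * Real.log (∑ i, rowWeight η C b i * Real.exp (a i / η)) := by
          gcongr
          exact sum_mul_log_div_le_log_sum hr hr1 fun i => mul_pos (hw i) (Real.exp_pos _)
  simp only [lseDual_eq_rowWeight, rowWeight_mul_exp_sinkhornUpdate hη.ne' (hr _), hr1,
    Real.log_one]
  linarith

theorem exists_norm_le_lseDual_le [Nonempty ι] [Nonempty κ] (hη : 0 < η) {M ρ : ℝ}
    (hM : ∀ i k j, C i j - C k j ≤ M) (hρ : 0 < ρ) (hr : ∀ i, ρ ≤ r i) (hr1 : ∑ i, r i = 1)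
    (a : ι → ℝ) (b : κ → ℝ) :
    ∃ a' : ι → ℝ, ‖a'‖ ≤ M - η * Real.log ρ ∧ lseDual η C r c a' b ≤ lseDual η C r c a b := by
  have hrpos (i : ι) : 0 < r i := hρ.trans_le (hr i)
  have hr_le_one (i : ι) : r i ≤ 1 :=
    (mem_Icc_of_mem_stdSimplex ⟨fun i => (hrpos i).le, hr1⟩ i).2
  have hosc (i k : ι) := sinkhornUpdate_sub_le hη (hM i k) hρ (hrpos i) (hr_le_one i) (hr k) b
  obtain ⟨k⟩ := ‹Nonempty ι›
  refine ⟨fun i => sinkhornUpdate η C r b i + -sinkhornUpdate η C r b k, ?_, ?_⟩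
  · refine (pi_norm_le_iff_of_nonempty _).mpr fun i => ?_
    rw [← sub_eq_add_neg, Real.norm_eq_abs]
    exact abs_sub_le_iff.mpr ⟨hosc i k, hosc k i⟩
  · rw [lseDual_add_const hη.ne' hr1]
    exact lseDual_sinkhornUpdate_le hη hrpos hr1 a b

end Dual

theorem stmt18_general {ι κ : Type*} [Fintype ι] [Fintype κ] {η : ℝ} (hη : 0 < η)
    {C : ι → κ → ℝ} {M N : ℝ} (hM : ∀ i k j, C i j - C k j ≤ M)
    (hN : ∀ j l i, C i j - C i l ≤ N) {r : ι → ℝ} {c : κ → ℝ} {ρ γ : ℝ} (hρ : 0 < ρ)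
    (hr : ∀ i, ρ ≤ r i) (hr1 : ∑ i, r i = 1) (hγ : 0 < γ) (hc : ∀ j, γ ≤ c j)
    (hc1 : ∑ j, c j = 1) :
    ∃ as bs, (∀ a b, lseDual η C r c as bs ≤ lseDual η C r c a b) ∧
      ‖as‖ ≤ M - η * Real.log ρ ∧ ‖bs‖ ≤ N - η * Real.log γ := by
  have : Nonempty ι := univ_nonempty_iff.mp (nonempty_of_sum_ne_zero (hr1 ▸ one_ne_zero))
  have : Nonempty κ := univ_nonempty_iff.mp (nonempty_of_sum_ne_zero (hc1 ▸ one_ne_zero))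
  let K : Set ((ι → ℝ) × (κ → ℝ)) :=
    Metric.closedBall 0 (M - η * Real.log ρ) ×ˢ Metric.closedBall 0 (N - η * Real.log γ)
  have hK : IsCompact K := (isCompact_closedBall _ _).prod (isCompact_closedBall _ _)
  have hred (p : (ι → ℝ) × (κ → ℝ)) :
      ∃ q ∈ K, lseDual η C r c q.1 q.2 ≤ lseDual η C r c p.1 p.2 := by
    obtain ⟨a, ha, hle_a⟩ := exists_norm_le_lseDual_le (c := c) hη hM hρ hr hr1 p.1 p.2
    obtain ⟨b, hb, hle_b⟩ := exists_norm_le_lseDual_le (c := r) hη hN hγ hc hc1 p.2 a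
    rw [lseDual_swap η C, lseDual_swap η C] at hle_b
    exact ⟨(a, b), ⟨mem_closedBall_zero_iff.mpr ha, mem_closedBall_zero_iff.mpr hb⟩,
      hle_b.trans hle_a⟩
  have hne : K.Nonempty := (hred 0).imp fun _ h => h.1
  obtain ⟨p, hp, hmin⟩ :=
    exists_forall_le_of_isCompact hK hne (continuous_lseDual η C r c).continuousOn hred
  exact ⟨p.1, p.2, fun a b => hmin (a, b), mem_closedBall_zero_iff.mp hp.1,
    mem_closedBall_zero_iff.mp hp.2⟩

section Bounds

variable {n : ℕ}

theorem infNorm_le_norm (u : Fin n → ℝ) : infNorm u ≤ ‖u‖ :=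
  Real.iSup_le (norm_le_pi_norm u) (norm_nonneg u)

theorem le_matSup (C : Fin n → Fin n → ℝ) (i j : Fin n) : C i j ≤ matSup C :=
  (Finite.le_ciSup (C i) j).trans (Finite.le_ciSup (fun i => ⨆ j, C i j) i)

theorem sub_le_matSup {C : Fin n → Fin n → ℝ} (hC : ∀ i j, 0 ≤ C i j) (i j k l : Fin n) :
    C i j - C k l ≤ matSup C :=
  (sub_le_self _ (hC k l)).trans (le_matSup C i j)

theorem minrc_le_left (r c : Fin n → ℝ) (i : Fin n) : minrc r c ≤ r i :=
  (min_le_left _ _).trans (Finite.ciInf_le r i)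

theorem minrc_le_right (r c : Fin n → ℝ) (j : Fin n) : minrc r c ≤ c j :=
  (min_le_right _ _).trans (Finite.ciInf_le c j)

theorem minrc_pos [NeZero n] {r c : Fin n → ℝ} (hr : ∀ i, 0 < r i) (hc : ∀ j, 0 < c j) :
    0 < minrc r c := by
  obtain ⟨i, hi⟩ := exists_eq_ciInf_of_finite (f := r)
  obtain ⟨j, hj⟩ := exists_eq_ciInf_of_finite (f := c)
  exact lt_min (hi ▸ hr i) (hj ▸ hc j)

theorem minrc_le_one [NeZero n] {r : Fin n → ℝ} (hr : ∀ i, 0 ≤ r i) (hr1 : ∑ i, r i = 1)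
    (c : Fin n → ℝ) : minrc r c ≤ 1 :=
  (minrc_le_left r c 0).trans (mem_Icc_of_mem_stdSimplex ⟨hr, hr1⟩ 0).2

theorem matSup_sub_mul_log_minrc_le [NeZero n] {η : ℝ} (hη : 0 < η) (C : Fin n → Fin n → ℝ)
    {r c : Fin n → ℝ} (hr : ∀ i, 0 < r i) (hr1 : ∑ i, r i = 1) (hc : ∀ j, 0 < c j) :
    matSup C - η * Real.log (minrc r c) ≤
      η * (matSup C / η + Real.log n - 2 * Real.log (minrc r c) + 1 / 2) := by
  have hlogn : 0 ≤ Real.log n := Real.log_natCast_nonneg n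
  have hlogm : Real.log (minrc r c) ≤ 0 :=
    Real.log_nonpos (minrc_pos hr hc).le (minrc_le_one (fun i => (hr i).le) hr1 c)
  calc matSup C - η * Real.log (minrc r c)
      = η * (matSup C / η - Real.log (minrc r c)) := by rw [mul_sub, mul_div_cancel₀ _ hη.ne']
    _ ≤ η * (matSup C / η + Real.log n - 2 * Real.log (minrc r c) + 1 / 2) := by
      gcongr
      linarith

end Bounds

theorem stmt18 (n : ℕ) (hn : 2 ≤ n) (η : ℝ) (hη : 0 < η)
    (C : Fin n → Fin n → ℝ) (hC : ∀ i j, 0 ≤ C i j)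
    (r c : Fin n → ℝ) (hr : ∀ i, 0 < r i) (hc : ∀ j, 0 < c j)
    (hr1 : ∑ i, r i = 1) (hc1 : ∑ j, c j = 1)
    (R : ℝ)
    (hR : R = matSup C / η + Real.log (n : ℝ) - 2 * Real.log (minrc r c)) :
    ∃ as bs : Fin n → ℝ,
      (∀ a b : Fin n → ℝ, phiLog η C r c as bs ≤ phiLog η C r c a b) ∧
      infNorm as ≤ η * (R + 1 / 2) ∧ infNorm bs ≤ η * (R + 1 / 2) := by
  have : NeZero n := ⟨by lia⟩
  have hm : 0 < minrc r c := minrc_pos hr hc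
  have hK : matSup C - η * Real.log (minrc r c) ≤ η * (R + 1 / 2) :=
    hR ▸ matSup_sub_mul_log_minrc_le hη C hr hr1 hc
  obtain ⟨as, bs, hmin, has, hbs⟩ := stmt18_general hη (fun i k j => sub_le_matSup hC i j k j)
    (fun j l i => sub_le_matSup hC i j i l) hm (minrc_le_left r c) hr1 hm (minrc_le_right r c) hc1
  exact ⟨as, bs, hmin, (infNorm_le_norm as).trans (has.trans hK),
    (infNorm_le_norm bs).trans (hbs.trans hK)⟩
end
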